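/- arXiv:math/0103074 — 4 statements merged into one kernel-verified Lean document; each statement's English description precedes it below -/
import Mathlib

section
/- Let h ≥ 1 be an integer, let n₁, …, n_h be positive integers, let d = n₁ + ⋯ + n_h, and for a real number a define C₀(a) = (a(1−a))^{h−1} · ∏_{i=1}^{h} ( ∏_{j=1}^{n_i−1} (j − n_i a) / (n_i − 1)! ) · d^{h−3} (where d^{h−3} is the real number d raised to the possibly negative integer power h−3). Then: (i) for every real a, C₀(1−a) = (−1)^{d−h} C₀(a); and (ii) if a is a positive integer, then (−1)^{d−h} C₀(a) = C₀(1−a) = (a(1−a))^{h−1} · ∏_{i=1}^{h} binom(n_i a − 1, n_i − 1) · d^{h−3}, where binom denotes the binomial coefficient. -/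
theorem aux_Icc (f : ℕ → ℝ) (m : ℕ) :
    ∏ j ∈ Finset.Icc 1 m, f j = ∏ k ∈ Finset.range m, f (k + 1) := by
  induction m with
  | zero => simp
  | succ k ih => rw [Finset.prod_Icc_succ_top (by omega), Finset.prod_range_succ, ih]

theorem aux_refl (m : ℕ) (x : ℝ) :
    ∏ j ∈ Finset.Icc 1 m, ((j : ℝ) - ((m + 1 : ℕ) : ℝ) * (1 - x)) =
      ∏ k ∈ Finset.range m, (((m + 1 : ℕ) : ℝ) * x - 1 - (k : ℝ)) := by
  rw [← Finset.prod_range_reflect, aux_Icc]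
  refine Finset.prod_congr rfl fun k hk => ?_
  have hk' := Finset.mem_range.mp hk
  have e : ((m - 1 - k : ℕ) : ℝ) = (m : ℝ) - 1 - k := by
    have : m = (m - 1 - k) + 1 + k := by omega
    have h2 : (m : ℝ) = ((m - 1 - k : ℕ) : ℝ) + 1 + k := by exact_mod_cast this
    linarith
  rw [e]
  push_cast
  ring

theorem aux_neg (m : ℕ) (y : ℝ) :
    ∏ k ∈ Finset.range m, (y - 1 - (k : ℝ)) =
      (-1 : ℝ) ^ m * ∏ j ∈ Finset.Icc 1 m, ((j : ℝ) - y) := by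
  rw [aux_Icc]
  have : (-1 : ℝ) ^ m = ∏ k ∈ Finset.range m, (-1 : ℝ) := by simp
  rw [this, ← Finset.prod_mul_distrib]
  refine Finset.prod_congr rfl fun k _ => ?_
  push_cast
  ring

theorem aux_choose (m a : ℕ) (ha : 0 < a) :
    (∏ k ∈ Finset.range m, (((m + 1 : ℕ) : ℝ) * (a : ℝ) - 1 - (k : ℝ))) / (m.factorial : ℝ) =
      (((m + 1) * a - 1).choose m : ℝ) := by
  have hm : m + 1 ≤ (m + 1) * a := Nat.le_mul_of_pos_right _ ha
  rw [div_eq_iff (by positivity)]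
  rw [← Nat.cast_mul (((m + 1) * a - 1).choose m), mul_comm (((m + 1) * a - 1).choose m), ← Nat.descFactorial_eq_factorial_mul_choose,
    Nat.descFactorial_eq_prod_range, Nat.cast_prod]
  refine Finset.prod_congr rfl fun k hk => ?_
  have hk' := Finset.mem_range.mp hk
  rw [Nat.cast_sub (by omega), Nat.cast_sub (by omega)]
  push_cast
  ring

/-- The genus-zero case of the final Proposition: for the localization expression
`C₀(a) = (a(1-a))^(h-1) · ∏ᵢ (∏_{j=1}^{nᵢ-1} (j - nᵢ a) / (nᵢ-1)!) · d^(h-3)`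
(with `d = n₁ + ⋯ + n_h`), one has the symmetry `C₀(1-a) = (-1)^(d-h) C₀(a)` for
all real `a`, and for positive integer `a` the binomial closed form. -/
theorem genus_zero_invariants (h : ℕ) (hh : 1 ≤ h) (n : Fin h → ℕ) (hn : ∀ i, 0 < n i)
    (d : ℕ) (hd : d = ∑ i, n i)
    (C0 : ℝ → ℝ)
    (hC0 : ∀ a : ℝ, C0 a = (a * (1 - a)) ^ (h - 1) *
      (∏ i, (∏ j ∈ Finset.Icc 1 (n i - 1), ((j : ℝ) - (n i : ℝ) * a)) /
        (Nat.factorial (n i - 1) : ℝ)) * (d : ℝ) ^ ((h : ℤ) - 3)) :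
    (∀ a : ℝ, C0 (1 - a) = (-1 : ℝ) ^ (d - h) * C0 a) ∧
    (∀ a : ℕ, 0 < a →
      (-1 : ℝ) ^ (d - h) * C0 (a : ℝ) = C0 (1 - (a : ℝ)) ∧
      C0 (1 - (a : ℝ)) = ((a : ℝ) * (1 - (a : ℝ))) ^ (h - 1) *
        (∏ i, ((n i * a - 1).choose (n i - 1) : ℝ)) * (d : ℝ) ^ ((h : ℤ) - 3)) := by
  have key : ∀ i, ∃ m, n i = m + 1 := fun i => ⟨n i - 1, by have := hn i; omega⟩
  choose m hm using key
  have hdm : d - h = ∑ i, m i := by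
    rw [hd]
    simp [hm, Finset.sum_add_distrib]
  have hi : ∀ a : ℝ, C0 (1 - a) = (-1 : ℝ) ^ (d - h) * C0 a := by
    intro a
    rw [hC0, hC0, hdm, ← Finset.prod_pow_eq_pow_sum]
    simp only [hm, Nat.add_sub_cancel, aux_refl, aux_neg, mul_div_assoc,
      Finset.prod_mul_distrib]
    ring
  refine ⟨hi, fun a ha => ⟨(hi a).symm, ?_⟩⟩
  rw [hC0]
  simp only [hm, Nat.add_sub_cancel, aux_refl, aux_choose _ a ha]
  ring
end

section
/- Let R be a commutative ring, let g ≥ 0 be an integer, and let c : ℕ → R satisfy c(0) = 1, c(i) = 0 for all i > g, and, for every integer k with 1 ≤ k ≤ 2g, Σ_{i=0}^{k} (−1)^i c(i) c(k−i) = 0. Then for every λ ∈ R: ( Σ_{i=0}^{g} (−1)^i c(i) λ^{g−i} ) · ( Σ_{i=0}^{g} (−1)^i c(i) (−λ)^{g−i} ) = (−1)^g λ^{2g}. -/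
/-- Mumford's relation `c(𝔼)c(𝔼^∨) = 1` implies
`c_g(𝔼^∨(λ)) · c_g(𝔼^∨(-λ)) = (-1)^g λ^(2g)`, as a purely algebraic identity: if
`c 0 = 1`, `c i = 0` for `i > g` and `∑_{i=0}^{k} (-1)^i c i c (k-i) = 0` for
`1 ≤ k ≤ 2g`, then the stated product identity holds for every `λ`. -/
theorem mumford_relation_identity (R : Type*) [CommRing R] (g : ℕ) (c : ℕ → R)
    (hc0 : c 0 = 1) (hcg : ∀ i, g < i → c i = 0)
    (hrel : ∀ k, 1 ≤ k → k ≤ 2 * g →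
      ∑ i ∈ Finset.range (k + 1), (-1 : R) ^ i * c i * c (k - i) = 0)
    (lam : R) :
    (∑ i ∈ Finset.range (g + 1), (-1 : R) ^ i * c i * lam ^ (g - i)) *
      (∑ i ∈ Finset.range (g + 1), (-1 : R) ^ i * c i * (-lam) ^ (g - i)) =
      (-1 : R) ^ g * lam ^ (2 * g) := by
  have h2 : (∑ i ∈ Finset.range (g + 1), (-1 : R) ^ i * c i * (-lam) ^ (g - i)) =
      (-1 : R) ^ g * ∑ j ∈ Finset.range (g + 1), c j * lam ^ (g - j) := by
    rw [Finset.mul_sum]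
    refine Finset.sum_congr rfl fun i hi => ?_
    have hi' : i ≤ g := by simpa [Nat.lt_succ_iff] using hi
    rw [neg_pow lam]
    have : (-1 : R) ^ g = (-1) ^ i * (-1) ^ (g - i) := by
      rw [← pow_add, Nat.add_sub_cancel' hi']
    rw [this]; ring
  rw [h2, mul_left_comm]
  congr 1
  rw [Finset.sum_mul_sum, ← Finset.sum_product']
  rw [← Finset.sum_fiberwise_of_maps_to (t := Finset.range (2 * g + 1))
    (g := fun p : ℕ × ℕ => p.1 + p.2)
    (by
      intro p hp
      simp only [Finset.mem_product, Finset.mem_range] at hp ⊢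
      omega)]
  have key : ∀ k ∈ Finset.range (2 * g + 1),
      (∑ p ∈ Finset.range (g + 1) ×ˢ Finset.range (g + 1) with p.1 + p.2 = k,
        (-1 : R) ^ p.1 * c p.1 * lam ^ (g - p.1) * (c p.2 * lam ^ (g - p.2))) =
      (∑ i ∈ Finset.range (k + 1), (-1 : R) ^ i * c i * c (k - i)) * lam ^ (2 * g - k) := by
    intro k _
    rw [← Finset.Nat.sum_antidiagonal_eq_sum_range_succ
      (fun i j => (-1 : R) ^ i * c i * c j) k, Finset.sum_mul]
    have hsub : (Finset.range (g + 1) ×ˢ Finset.range (g + 1)).filter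
        (fun p : ℕ × ℕ => p.1 + p.2 = k) ⊆ Finset.HasAntidiagonal.antidiagonal k := by
      intro p hp
      simp only [Finset.mem_filter] at hp
      simpa using hp.2
    rw [← Finset.sum_subset hsub]
    · refine Finset.sum_congr rfl fun p hp => ?_
      simp only [Finset.mem_filter, Finset.mem_product, Finset.mem_range] at hp
      have : 2 * g - k = (g - p.1) + (g - p.2) := by omega
      rw [this, pow_add]; ring
    · intro p hp hn
      simp only [Finset.HasAntidiagonal.mem_antidiagonal] at hp
      simp only [Finset.mem_filter, Finset.mem_product, Finset.mem_range] at hn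
      have : g < p.1 ∨ g < p.2 := by omega
      rcases this with h | h <;> simp [hcg _ h]
  rw [Finset.sum_congr rfl key, Finset.sum_eq_single 0]
  · simp [hc0]
  · intro k hk h0
    rw [hrel k (by omega) (by simp only [Finset.mem_range] at hk; omega), zero_mul]
  · simp
end

section
/- Let n ≥ 1. The map B sending a totally real subspace V = A·ℝⁿ of ℂⁿ (A ∈ GL(n,ℂ)) to the matrix A Ā⁻¹ is a well-defined bijection from the set ℛₙ of totally real subspaces of ℂⁿ onto the set 𝑅̃ₙ = {D ∈ GL(n,ℂ) : D D̄ = Iₙ}, where Ā and D̄ denote entrywise complex conjugation and Iₙ is the n×n identity matrix. Concretely: (a) for every A ∈ GL(n,ℂ), the matrix D = A Ā⁻¹ satisfies D D̄ = Iₙ; (b) if A₁·ℝⁿ = A₂·ℝⁿ then A₁ Ā₁⁻¹ = A₂ Ā₂⁻¹, and conversely; (c) for every D ∈ GL(n,ℂ) with D D̄ = Iₙ there exists A ∈ GL(n,ℂ) with A Ā⁻¹ = D. -/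
lemma conj_conj_aux {n : ℕ} (A : Matrix (Fin n) (Fin n) ℂ) :
    (A.map (starRingEnd ℂ)).map (starRingEnd ℂ) = A := by
  ext i j; simp

lemma isUnit_conj_aux {n : ℕ} {A : Matrix (Fin n) (Fin n) ℂ} (h : IsUnit A) :
    IsUnit (A.map (starRingEnd ℂ)) :=
  h.map (starRingEnd ℂ).mapMatrix

lemma conj_inv_aux {n : ℕ} {A : Matrix (Fin n) (Fin n) ℂ} (h : IsUnit A) :
    (A⁻¹).map (starRingEnd ℂ) = (A.map (starRingEnd ℂ))⁻¹ := by
  symm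
  apply Matrix.inv_eq_right_inv
  rw [← Matrix.map_mul, Matrix.mul_nonsing_inv _ ((Matrix.isUnit_iff_isUnit_det _).1 h)]
  exact Matrix.map_one _ (map_zero _) (map_one _)

lemma subset_aux {n : ℕ} {A₁ A₂ : Matrix (Fin n) (Fin n) ℂ} (h₁ : IsUnit A₁) (h₂ : IsUnit A₂)
    (h : A₁ * (A₁.map (starRingEnd ℂ))⁻¹ = A₂ * (A₂.map (starRingEnd ℂ))⁻¹) (y : Fin n → ℝ) :
    ∃ z : Fin n → ℝ, A₁.mulVec (fun i => (y i : ℂ)) = A₂.mulVec (fun i => (z i : ℂ)) := by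
  have d2 := (Matrix.isUnit_iff_isUnit_det _).1 h₂
  have e1 := (Matrix.isUnit_iff_isUnit_det _).1 (isUnit_conj_aux h₁)
  have hY : (A₂⁻¹ * A₁).map (starRingEnd ℂ) = A₂⁻¹ * A₁ := by
    rw [Matrix.map_mul, conj_inv_aux h₂]
    have : A₁ = A₂ * (A₂.map (starRingEnd ℂ))⁻¹ * A₁.map (starRingEnd ℂ) := by
      rw [← h, Matrix.nonsing_inv_mul_cancel_right _ _ e1]
    conv_rhs => rw [this]
    rw [Matrix.mul_assoc A₂, Matrix.nonsing_inv_mul_cancel_left _ _ d2]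
  refine ⟨fun i => ((A₂⁻¹ * A₁).mulVec (fun i => (y i : ℂ)) i).re, ?_⟩
  have : (fun i => ((((A₂⁻¹ * A₁).mulVec (fun i => (y i : ℂ)) i).re : ℝ) : ℂ))
      = (A₂⁻¹ * A₁).mulVec (fun i => (y i : ℂ)) := by
    funext i
    apply Complex.conj_eq_iff_re.1
    conv_rhs => rw [← hY]
    simp [Matrix.mulVec, dotProduct]
  rw [this, Matrix.mulVec_mulVec, Matrix.mul_nonsing_inv_cancel_left _ _ d2]

lemma forward_aux {n : ℕ} {A₁ A₂ : Matrix (Fin n) (Fin n) ℂ} (h₁ : IsUnit A₁) (h₂ : IsUnit A₂)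
    (h : ∀ y : Fin n → ℝ, ∃ z : Fin n → ℝ,
      A₁.mulVec (fun i => (y i : ℂ)) = A₂.mulVec (fun i => (z i : ℂ))) :
    A₁ * (A₁.map (starRingEnd ℂ))⁻¹ = A₂ * (A₂.map (starRingEnd ℂ))⁻¹ := by
  have e1 := (Matrix.isUnit_iff_isUnit_det _).1 (isUnit_conj_aux h₁)
  have e2 := (Matrix.isUnit_iff_isUnit_det _).1 (isUnit_conj_aux h₂)
  choose z hz using h
  let Y : Matrix (Fin n) (Fin n) ℂ := Matrix.of fun i j => (z (Pi.single j 1) i : ℂ)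
  have hA : A₁ = A₂ * Y := by
    ext i j
    have := congrFun (hz (Pi.single j 1)) i
    have hs : (fun i => ((Pi.single j (1 : ℝ) : Fin n → ℝ) i : ℂ)) = Pi.single j 1 := by
      funext k
      by_cases hk : k = j
      · subst hk; simp
      · simp [hk]
    rw [hs, Matrix.mulVec_single_one] at this
    simpa [Matrix.mul_apply, Y, Matrix.mulVec, dotProduct] using this
  have hY : Y.map (starRingEnd ℂ) = Y := by ext i j; simp [Y]
  have hA' : A₁.map (starRingEnd ℂ) = A₂.map (starRingEnd ℂ) * Y := by
    conv_lhs => rw [hA, Matrix.map_mul, hY]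
  have hY2 : Y = (A₂.map (starRingEnd ℂ))⁻¹ * A₁.map (starRingEnd ℂ) := by
    rw [hA', Matrix.nonsing_inv_mul_cancel_left _ _ e2]
  have hA2 : A₁ = A₂ * (A₂.map (starRingEnd ℂ))⁻¹ * A₁.map (starRingEnd ℂ) := by
    rw [Matrix.mul_assoc, ← hY2]; exact hA
  calc A₁ * (A₁.map (starRingEnd ℂ))⁻¹
      = A₂ * (A₂.map (starRingEnd ℂ))⁻¹ * A₁.map (starRingEnd ℂ)
          * (A₁.map (starRingEnd ℂ))⁻¹ := by rw [← hA2]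
    _ = _ := Matrix.mul_nonsing_inv_cancel_right _ _ e1

lemma exists_real_aux {n : ℕ} (D : Matrix (Fin n) (Fin n) ℂ) :
    ∃ t : ℝ, IsUnit (((t : ℂ) + Complex.I) • (1 : Matrix (Fin n) (Fin n) ℂ)
      + ((t : ℂ) - Complex.I) • D) := by
  let P : Matrix (Fin n) (Fin n) (Polynomial ℂ) :=
    (Polynomial.X + Polynomial.C Complex.I) • (1 : Matrix (Fin n) (Fin n) (Polynomial ℂ))
      + (Polynomial.X - Polynomial.C Complex.I) • D.map Polynomial.C
  have hev : ∀ w : ℂ, P.det.eval w =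
      ((w + Complex.I) • (1 : Matrix (Fin n) (Fin n) ℂ) + (w - Complex.I) • D).det := by
    intro w
    rw [← Polynomial.coe_evalRingHom, RingHom.map_det]
    congr 1
    ext i j
    by_cases hij : i = j
    · subst hij; simp [P]
    · simp [P, hij]
  have hne : P.det ≠ 0 := by
    intro h0
    have := hev Complex.I
    rw [h0] at this
    simp only [Polynomial.eval_zero, sub_self, zero_smul, add_zero, Matrix.det_smul,
      Matrix.det_one, mul_one, ← two_mul] at this
    exact pow_ne_zero _ (mul_ne_zero two_ne_zero Complex.I_ne_zero) this.symm
  have hfin : (P.det.rootSet ℂ).Finite := Polynomial.rootSet_finite _ _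
  have hinf : (Set.range (fun t : ℝ => (t : ℂ))).Infinite :=
    Set.infinite_range_of_injective Complex.ofReal_injective
  obtain ⟨_, ⟨t, rfl⟩, ht⟩ := (hinf.sdiff hfin).nonempty
  refine ⟨t, (Matrix.isUnit_iff_isUnit_det _).2 (isUnit_iff_ne_zero.2 ?_)⟩
  rw [← hev]
  intro h0
  exact ht ((Polynomial.mem_rootSet.2 ⟨hne, by simpa using h0⟩))

/-- The map `B : A·ℝⁿ ↦ A Ā⁻¹` is a well-defined bijection from totally real
subspaces of `ℂⁿ` onto `{D ∈ GL(n,ℂ) : D D̄ = Iₙ}`. Concretely: (a) `D = A Ā⁻¹`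
satisfies `D D̄ = Iₙ`; (b) `A₁·ℝⁿ = A₂·ℝⁿ` iff `A₁ Ā₁⁻¹ = A₂ Ā₂⁻¹`; (c) every
`D ∈ GL(n,ℂ)` with `D D̄ = Iₙ` is of the form `A Ā⁻¹`. -/
theorem totally_real_matrix_bijection (n : ℕ) (hn : 1 ≤ n) :
    (∀ A : Matrix (Fin n) (Fin n) ℂ, IsUnit A →
      (A * (A.map (starRingEnd ℂ))⁻¹) *
        ((A * (A.map (starRingEnd ℂ))⁻¹).map (starRingEnd ℂ)) = 1) ∧
    (∀ A₁ A₂ : Matrix (Fin n) (Fin n) ℂ, IsUnit A₁ → IsUnit A₂ →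
      ({x : Fin n → ℂ | ∃ y : Fin n → ℝ, x = A₁.mulVec (fun i => (y i : ℂ))} =
          {x : Fin n → ℂ | ∃ y : Fin n → ℝ, x = A₂.mulVec (fun i => (y i : ℂ))} ↔
        A₁ * (A₁.map (starRingEnd ℂ))⁻¹ = A₂ * (A₂.map (starRingEnd ℂ))⁻¹)) ∧
    (∀ D : Matrix (Fin n) (Fin n) ℂ, IsUnit D → D * D.map (starRingEnd ℂ) = 1 →
      ∃ A : Matrix (Fin n) (Fin n) ℂ, IsUnit A ∧ A * (A.map (starRingEnd ℂ))⁻¹ = D) := by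
  refine ⟨?_, ?_, ?_⟩
  · intro A hA
    have d := (Matrix.isUnit_iff_isUnit_det _).1 hA
    have e := (Matrix.isUnit_iff_isUnit_det _).1 (isUnit_conj_aux hA)
    rw [Matrix.map_mul, conj_inv_aux (isUnit_conj_aux hA), conj_conj_aux, ← Matrix.mul_assoc,
      Matrix.nonsing_inv_mul_cancel_right _ _ e, Matrix.mul_nonsing_inv _ d]
  · intro A₁ A₂ h₁ h₂
    constructor
    · intro h
      apply forward_aux h₁ h₂
      intro y
      have : A₁.mulVec (fun i => (y i : ℂ)) ∈
          {x : Fin n → ℂ | ∃ y : Fin n → ℝ, x = A₂.mulVec (fun i => (y i : ℂ))} := by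
        rw [← h]; exact ⟨y, rfl⟩
      exact this
    · intro h
      ext x
      constructor
      · rintro ⟨y, rfl⟩
        exact subset_aux h₁ h₂ h y
      · rintro ⟨y, rfl⟩
        exact subset_aux h₂ h₁ h.symm y
  · intro D _ hD
    obtain ⟨t, ht⟩ := exists_real_aux D
    refine ⟨_, ht, ?_⟩
    have e := (Matrix.isUnit_iff_isUnit_det _).1 (isUnit_conj_aux ht)
    letI := Matrix.invertibleOfIsUnitDet _ e
    rw [Matrix.mul_inv_eq_iff_eq_mul_of_invertible]
    have hc : (((t : ℂ) + Complex.I) • (1 : Matrix (Fin n) (Fin n) ℂ)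
        + ((t : ℂ) - Complex.I) • D).map (starRingEnd ℂ) =
        ((t : ℂ) - Complex.I) • (1 : Matrix (Fin n) (Fin n) ℂ)
        + ((t : ℂ) + Complex.I) • D.map (starRingEnd ℂ) := by
      ext i j
      by_cases hij : i = j
      · subst hij; simp [sub_eq_add_neg]
      · simp [hij]
    rw [hc, Matrix.mul_add, Matrix.mul_smul, Matrix.mul_smul, hD, Matrix.mul_one, add_comm]
end

section
/- Let n ≥ 1, let A ∈ GL(n,ℂ), and let V = A·ℝⁿ = {A x : x ∈ ℝⁿ} ⊆ ℂⁿ be the associated totally real subspace. Then V is Lagrangian with respect to the standard symplectic form on ℂⁿ ≅ ℝ²ⁿ (equivalently, V is orthogonal to iV with respect to the standard real inner product Re Σᵢ uᵢ conj(vᵢ) on ℂⁿ; equivalently, Im Σᵢ uᵢ conj(vᵢ) = 0 for all u, v ∈ V) if and only if the matrix A Ā⁻¹ is symmetric, i.e. A Ā⁻¹ = (A Ā⁻¹)ᵗ, where Ā denotes the entrywise complex conjugate of A. -/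
/-- Under the bijection `A·ℝⁿ ↦ A Ā⁻¹`, Lagrangian subspaces correspond to symmetric
matrices: the totally real subspace `V = A·ℝⁿ` is Lagrangian for the standard
symplectic form on `ℂⁿ` (i.e. `Im ∑ᵢ uᵢ conj(vᵢ) = 0` for all `u, v ∈ V`) iff
`A Ā⁻¹` is symmetric. -/
theorem lagrangian_iff_symmetric (n : ℕ) (hn : 1 ≤ n)
    (A : Matrix (Fin n) (Fin n) ℂ) (hA : IsUnit A) :
    (∀ u ∈ {x : Fin n → ℂ | ∃ y : Fin n → ℝ, x = A.mulVec (fun i => (y i : ℂ))},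
     ∀ v ∈ {x : Fin n → ℂ | ∃ y : Fin n → ℝ, x = A.mulVec (fun i => (y i : ℂ))},
      (∑ i, u i * (starRingEnd ℂ) (v i)).im = 0) ↔
    A * (A.map (starRingEnd ℂ))⁻¹ = (A * (A.map (starRingEnd ℂ))⁻¹).transpose := by
  classical
  set B : Matrix (Fin n) (Fin n) ℂ := A.map (starRingEnd ℂ) with hB
  have hBu : IsUnit B := by
    have := hA.map (starRingEnd ℂ).mapMatrix
    simpa [hB] using this
  have hBd : IsUnit B.det := (Matrix.isUnit_iff_isUnit_det B).1 hBu
  have hBtd : IsUnit B.transpose.det := by rwa [Matrix.det_transpose]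
  have key : (A.transpose * B = B.transpose * A) ↔
      A * B⁻¹ = (A * B⁻¹).transpose := by
    rw [Matrix.transpose_mul, Matrix.transpose_nonsing_inv]
    constructor
    · intro h
      calc A * B⁻¹ = B.transpose⁻¹ * (B.transpose * A) * B⁻¹ := by
            rw [Matrix.nonsing_inv_mul_cancel_left _ _ hBtd]
        _ = B.transpose⁻¹ * A.transpose := by
            rw [← h, ← Matrix.mul_assoc, Matrix.mul_nonsing_inv_cancel_right _ _ hBd]
    · intro h
      calc A.transpose * B = B.transpose * (B.transpose⁻¹ * A.transpose) * B := by
            rw [Matrix.mul_nonsing_inv_cancel_left _ _ hBtd]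
        _ = B.transpose * A := by
            rw [← h, Matrix.mul_assoc, Matrix.nonsing_inv_mul_cancel_right _ _ hBd]
  rw [← key]
  constructor
  · intro h
    ext i j
    have h1 := h (fun k => A k i) ⟨Pi.single i 1, by
      ext k; simp [Matrix.mulVec, dotProduct, Pi.single_apply, apply_ite Complex.ofReal]⟩
      (fun k => A k j) ⟨Pi.single j 1, by
      ext k; simp [Matrix.mulVec, dotProduct, Pi.single_apply, apply_ite Complex.ofReal]⟩
    have h2 := Complex.conj_eq_iff_im.2 h1
    rw [map_sum] at h2
    simp only [map_mul, Complex.conj_conj] at h2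
    simp only [Matrix.mul_apply, Matrix.transpose_apply, hB, Matrix.map_apply]
    exact h2.symm
  · rintro h u ⟨y, rfl⟩ v ⟨z, rfl⟩
    have conjv : ∀ (w : Fin n → ℝ) (i : Fin n),
        (starRingEnd ℂ) (A.mulVec (fun i => (w i : ℂ)) i) = B.mulVec (fun i => (w i : ℂ)) i := by
      intro w i
      simp [Matrix.mulVec, dotProduct, hB]
    have conjv' : ∀ (w : Fin n → ℝ) (i : Fin n),
        (starRingEnd ℂ) (B.mulVec (fun i => (w i : ℂ)) i) = A.mulVec (fun i => (w i : ℂ)) i := by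
      intro w i
      rw [← conjv, Complex.conj_conj]
    rw [← Complex.conj_eq_iff_im, map_sum]
    simp only [map_mul, conjv, conjv']
    change B.mulVec (fun i => (y i : ℂ)) ⬝ᵥ A.mulVec (fun i => (z i : ℂ))
      = A.mulVec (fun i => (y i : ℂ)) ⬝ᵥ B.mulVec (fun i => (z i : ℂ))
    rw [← Matrix.vecMul_transpose, ← Matrix.dotProduct_mulVec, Matrix.mulVec_mulVec, ← h,
      ← Matrix.mulVec_mulVec, Matrix.dotProduct_mulVec, Matrix.vecMul_transpose]
end
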